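/- Let s ≥ 0 and p ∈ (1,2), and set p' = p/(2−p). There exists a constant C > 0, depending only on s and p, such that for every R ≥ 1, every 0 < r ≤ 1, and every U₀ ∈ L²(ℝ³) ∩ L²_hL^p_v(ℝ³), one has ∫_{{|ξ₃| < r, |ξ_h| < R}} (1 + |ξ|²)^s |Û₀(ξ)|² dξ ≤ C R^{2s} r^{1/p'} ‖U₀‖²_{L²_hL^p_v}. -/

import Mathlib

/- Common setup: the space ℝ³ (as a Euclidean space), Fourier transform,
   partial derivatives, Sobolev-type norms. -/

noncomputable section

open MeasureTheory Real Complex Filter ENNReal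

/-- The space `ℝ³`. -/
abbrev E3 : Type := EuclideanSpace ℝ (Fin 3)

/-- Fourier transform on `ℝ³`. -/
def FT (f : E3 → ℂ) : E3 → ℂ := FourierTransform.fourier f

/-- Inverse Fourier transform on `ℝ³`. -/
def FTinv (f : E3 → ℂ) : E3 → ℂ := FourierTransformInv.fourierInv f

/-- The point `(x₁, x₂, x₃) ∈ ℝ³`. -/
def pt (x1 x2 x3 : ℝ) : E3 := (EuclideanSpace.equiv (Fin 3) ℝ).symm ![x1, x2, x3]

/-- Fourier transform of a real-valued function. -/
def FTr (f : E3 → ℝ) : E3 → ℂ := FT (fun x => (f x : ℂ))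

/-- Partial derivative `∂ᵢ` of a real-valued function. -/
def pd (i : Fin 3) (f : E3 → ℝ) (x : E3) : ℝ := fderiv ℝ f x (EuclideanSpace.single i 1)

/-- Partial derivative `∂ᵢ` of a complex-valued function. -/
def pdC (i : Fin 3) (f : E3 → ℂ) (x : E3) : ℂ := fderiv ℝ f x (EuclideanSpace.single i 1)

/-- The `H^s` norm `(∫ (1+|ξ|²)^s |û(ξ)|² dξ)^{1/2}` of a complex-valued function. -/
def hsNormC (s : ℝ) (f : E3 → ℂ) : ℝ :=
  (∫ ξ : E3, (1 + ‖ξ‖ ^ 2) ^ s * ‖FT f ξ‖ ^ 2) ^ (1/2 : ℝ)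

/-- Membership in `H^s(ℝ³)` (finiteness of the `H^s` norm). -/
def MemHsC (s : ℝ) (f : E3 → ℂ) : Prop :=
  Measurable f ∧ Integrable (fun ξ : E3 => (1 + ‖ξ‖ ^ 2) ^ s * ‖FT f ξ‖ ^ 2)

/-- `H^s` norm of a real-valued function. -/
def hsNormR (s : ℝ) (f : E3 → ℝ) : ℝ := hsNormC s (fun x => (f x : ℂ))

/-- Membership in `H^s(ℝ³)` for a real-valued function. -/
def MemHsR (s : ℝ) (f : E3 → ℝ) : Prop := MemHsC s (fun x => (f x : ℂ))

/-- `H^s` norm of an `ℝ⁴`-valued function. -/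
def hsNorm4 (s : ℝ) (U : E3 → Fin 4 → ℝ) : ℝ :=
  (∑ m : Fin 4, hsNormR s (fun x => U x m) ^ 2) ^ (1/2 : ℝ)

/-- Membership in `H^s(ℝ³)⁴`. -/
def MemHs4 (s : ℝ) (U : E3 → Fin 4 → ℝ) : Prop := ∀ m : Fin 4, MemHsR s (fun x => U x m)

/-- A smooth cut-off function `ψ` with values in `[0,1]`, equal to `1` on `(-∞,1]`
and to `0` on `[2,∞)`. -/
def IsCutoff (ψ : ℝ → ℝ) : Prop :=
  ContDiff ℝ (⊤ : ℕ∞) ψ ∧ (∀ x, ψ x ∈ Set.Icc (0:ℝ) 1) ∧ (∀ x ≤ (1:ℝ), ψ x = 1) ∧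
    (∀ x, (2:ℝ) ≤ x → ψ x = 0)

/-- The norm `|ξ_h|` of the horizontal component of a frequency `ξ`. -/
def xih (ξ : E3) : ℝ := Real.sqrt (ξ 0 ^ 2 + ξ 1 ^ 2)

/-- The frequency cut-off function `Ψ_{r,R}`. -/
def Psi (ψ : ℝ → ℝ) (r R : ℝ) (ξ : E3) : ℝ :=
  ψ (‖ξ‖ / R) * ((1 - ψ (xih ξ / r)) * (1 - ψ (|ξ 2| / r)))

/-- The set `C_{r,R} = {ξ : |ξ| ≤ R, |ξ_h| ≥ r, |ξ₃| ≥ r}`. -/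
def CrR (r R : ℝ) : Set E3 := {ξ | ‖ξ‖ ≤ R ∧ r ≤ xih ξ ∧ r ≤ |ξ 2|}

/-- The frequency cut-off operator `Ψ_{r,R}(D) g = 𝓕⁻¹(Ψ_{r,R} ĝ)`. -/
def PsiD (ψ : ℝ → ℝ) (r R : ℝ) (g : E3 → ℂ) : E3 → ℂ :=
  FTinv (fun ξ => (Psi ψ r R ξ : ℂ) * FT g ξ)

/-- Anisotropic norm `‖f‖_{L²_h L^p_v}`. -/
def L2hLpvNorm (p : ℝ) (f : E3 → ℝ) : ℝ :=
  (∫ xh : ℝ × ℝ, (∫ x3 : ℝ, |f (pt xh.1 xh.2 x3)| ^ p) ^ (2/p)) ^ (1/2 : ℝ)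

/-- Anisotropic norm `‖f‖_{L^p_h L²_v}`. -/
def LphL2vNorm (p : ℝ) (f : E3 → ℝ) : ℝ :=
  (∫ xh : ℝ × ℝ, (∫ x3 : ℝ, (f (pt xh.1 xh.2 x3)) ^ 2) ^ (p/2)) ^ (1/p)

/-- Membership in `L²_h L^p_v(ℝ³)`. -/
def MemL2hLpv (p : ℝ) (f : E3 → ℝ) : Prop :=
  Integrable (fun xh : ℝ × ℝ => (∫ x3 : ℝ, |f (pt xh.1 xh.2 x3)| ^ p) ^ (2/p))

/-- Membership in `L^p_h L²_v(ℝ³)`. -/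
def MemLphL2v (p : ℝ) (f : E3 → ℝ) : Prop :=
  Integrable (fun xh : ℝ × ℝ => (∫ x3 : ℝ, (f (pt xh.1 xh.2 x3)) ^ 2) ^ (p/2))

/-- The norm of the space `Y_{s,s₀,p}`. -/
def Ynorm (s s0 p : ℝ) (U : E3 → Fin 4 → ℝ) : ℝ :=
  max (hsNorm4 (s + s0) U)
    (max ((∑ m : Fin 4, L2hLpvNorm p (fun x => U x m) ^ 2) ^ (1/2 : ℝ))
         ((∑ m : Fin 4, LphL2vNorm p (fun x => U x m) ^ 2) ^ (1/2 : ℝ)))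

/-- Membership in `Y_{s,s₀,p} = H^{s+s₀}(ℝ³)⁴ ∩ L²_hL^p_v(ℝ³)⁴ ∩ L^p_hL²_v(ℝ³)⁴`. -/
def MemY (s s0 p : ℝ) (U : E3 → Fin 4 → ℝ) : Prop :=
  ∀ m : Fin 4, MemHsR (s + s0) (fun x => U x m) ∧ MemL2hLpv p (fun x => U x m) ∧
    MemLphL2v p (fun x => U x m)

/-- `𝒞(U₀) = max{‖U₀‖_Y, ‖U₀‖_Y²}`. -/
def CC (s s0 p : ℝ) (U : E3 → Fin 4 → ℝ) : ℝ :=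
  max (Ynorm s s0 p U) (Ynorm s s0 p U ^ 2)

/-! A Gaussian weight `w` of width `R` in `ξ_h` and `r` in `ξ₃` dominates the indicator function of
`{|ξ₃| < r, |ξ_h| < R}` up to a constant, and there `(1 + |ξ|²)^s ≲ R^{2s}`. By Plancherel duality
`∫ w |Û|²` is the quadratic form `∬ U(x) U(y) ŵ(y - x)`, whose kernel `ŵ` is the product of three
Gaussian probability densities, of width `1/R` in both horizontal variables and `1/r` vertically.
Young's inequality in the vertical variable costs the `L^q` norm, `1/q = 2 - 2/p`, of a probability
density bounded by `r`, hence at most `r^{2/p - 1}`. In the horizontal variables only `L²` norms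
occur, and Young's inequality costs the mass `1` of the kernel: `R` enters through `(1 + |ξ|²)^s`
alone. -/

open scoped FourierTransform ComplexConjugate

section Kernel

variable {α β α' β' : Type*} [MeasurableSpace α] [MeasurableSpace β] [MeasurableSpace α']
  [MeasurableSpace β'] {μ : Measure α} {ν : Measure β} {μ' : Measure α'} {ν' : Measure β'}

lemma mul_mul_rpow_eq_geom_mean {p q c : ℝ} (hp : 1 ≤ p) (hq : 1 ≤ q) (hc : c ≤ 1)
    (hpqc : p⁻¹ + q⁻¹ + c = 2) (u v w : ℝ≥0∞) :
    u * v * w ^ c =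
      (u ^ p * v ^ q) ^ (1 - c) * (u ^ p * w) ^ (1 - q⁻¹) * (v ^ q * w) ^ (1 - p⁻¹) := by
  have hc' : 0 ≤ 1 - c := sub_nonneg.2 hc
  have hp' : 0 ≤ 1 - p⁻¹ := sub_nonneg.2 (inv_le_one_of_one_le₀ hp)
  have hq' : 0 ≤ 1 - q⁻¹ := sub_nonneg.2 (inv_le_one_of_one_le₀ hq)
  have hu : (u ^ p) ^ (1 - c) * (u ^ p) ^ (1 - q⁻¹) = u := by
    rw [← ENNReal.rpow_add_of_nonneg _ _ hc' hq', show 1 - c + (1 - q⁻¹) = p⁻¹ by linarith,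
      ENNReal.rpow_rpow_inv (by positivity)]
  have hv : (v ^ q) ^ (1 - c) * (v ^ q) ^ (1 - p⁻¹) = v := by
    rw [← ENNReal.rpow_add_of_nonneg _ _ hc' hp', show 1 - c + (1 - p⁻¹) = q⁻¹ by linarith,
      ENNReal.rpow_rpow_inv (by positivity)]
  have hw : w ^ (1 - q⁻¹) * w ^ (1 - p⁻¹) = w ^ c := by
    rw [← ENNReal.rpow_add_of_nonneg _ _ hq' hp', show 1 - q⁻¹ + (1 - p⁻¹) = c by linarith]
  simp only [ENNReal.mul_rpow_of_nonneg _ _ hc', ENNReal.mul_rpow_of_nonneg _ _ hp',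
    ENNReal.mul_rpow_of_nonneg _ _ hq']
  nth_rw 1 [← hu, ← hv, ← hw]
  ring

lemma lintegral_mul_rpow_mul_rpow_mul_rpow_le {f g h : α → ℝ≥0∞} (hf : AEMeasurable f μ)
    (hg : AEMeasurable g μ) (hh : AEMeasurable h μ) {a b c : ℝ} (ha : 0 ≤ a) (hb : 0 ≤ b)
    (hc : 0 ≤ c) (habc : a + b + c = 1) :
    ∫⁻ x, f x ^ a * g x ^ b * h x ^ c ∂μ ≤
      (∫⁻ x, f x ∂μ) ^ a * (∫⁻ x, g x ∂μ) ^ b * (∫⁻ x, h x ∂μ) ^ c := by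
  have := ENNReal.lintegral_prod_norm_pow_le (μ := μ) Finset.univ (f := ![f, g, h])
    (p := ![a, b, c]) (by simp [Fin.forall_fin_succ, hf, hg, hh])
    (by simp [Fin.sum_univ_three, habc]) (by simp [Fin.forall_fin_succ, ha, hb, hc])
  simpa [Fin.prod_univ_three] using this

/-- Young's convolution inequality for kernels that need not be translation invariant. -/
lemma lintegral_prod_mul_mul_rpow_le [SFinite μ] [SFinite ν] {f : α → ℝ≥0∞} {g : β → ℝ≥0∞}
    {k : α × β → ℝ≥0∞} (hf : Measurable f) (hg : Measurable g) (hk : Measurable k) {M : ℝ≥0∞}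
    (hkr : ∀ x, ∫⁻ y, k (x, y) ∂ν ≤ M) (hkl : ∀ y, ∫⁻ x, k (x, y) ∂μ ≤ M) {p q c : ℝ}
    (hp : 1 ≤ p) (hq : 1 ≤ q) (hc : c ≤ 1) (hpqc : p⁻¹ + q⁻¹ + c = 2) :
    ∫⁻ z, f z.1 * g z.2 * k z ^ c ∂μ.prod ν ≤
      (∫⁻ x, f x ^ p ∂μ) ^ p⁻¹ * (∫⁻ y, g y ^ q ∂ν) ^ q⁻¹ * M ^ c := by
  have hp' : 0 ≤ 1 - p⁻¹ := sub_nonneg.2 (inv_le_one_of_one_le₀ hp)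
  have hq' : 0 ≤ 1 - q⁻¹ := sub_nonneg.2 (inv_le_one_of_one_le₀ hq)
  have hfk : ∫⁻ z, f z.1 ^ p * k z ∂μ.prod ν ≤ (∫⁻ x, f x ^ p ∂μ) * M := by
    rw [lintegral_prod _ (by fun_prop), ← lintegral_mul_const _ (by fun_prop)]
    gcongr with x
    calc ∫⁻ y, f x ^ p * k (x, y) ∂ν = f x ^ p * ∫⁻ y, k (x, y) ∂ν :=
          lintegral_const_mul _ (by fun_prop)
      _ ≤ f x ^ p * M := by gcongr; exact hkr x
  have hgk : ∫⁻ z, g z.2 ^ q * k z ∂μ.prod ν ≤ (∫⁻ y, g y ^ q ∂ν) * M := by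
    rw [lintegral_prod_symm _ (by fun_prop), ← lintegral_mul_const _ (by fun_prop)]
    gcongr with y
    calc ∫⁻ x, g y ^ q * k (x, y) ∂μ = g y ^ q * ∫⁻ x, k (x, y) ∂μ :=
          lintegral_const_mul _ (by fun_prop)
      _ ≤ g y ^ q * M := by gcongr; exact hkl y
  simp_rw [mul_mul_rpow_eq_geom_mean hp hq hc hpqc]
  calc _ ≤ (∫⁻ z, f z.1 ^ p * g z.2 ^ q ∂μ.prod ν) ^ (1 - c) *
          (∫⁻ z, f z.1 ^ p * k z ∂μ.prod ν) ^ (1 - q⁻¹) *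
          (∫⁻ z, g z.2 ^ q * k z ∂μ.prod ν) ^ (1 - p⁻¹) :=
        lintegral_mul_rpow_mul_rpow_mul_rpow_le (by fun_prop) (by fun_prop) (by fun_prop)
          (sub_nonneg.2 hc) hq' hp' (by linarith)
    _ ≤ ((∫⁻ x, f x ^ p ∂μ) * ∫⁻ y, g y ^ q ∂ν) ^ (1 - c) *
          ((∫⁻ x, f x ^ p ∂μ) * M) ^ (1 - q⁻¹) * ((∫⁻ y, g y ^ q ∂ν) * M) ^ (1 - p⁻¹) := by
        rw [lintegral_prod_mul (hf.pow_const p).aemeasurable (hg.pow_const q).aemeasurable]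
        gcongr
    _ = _ := by
        rw [ENNReal.rpow_inv_rpow (by positivity), ENNReal.rpow_inv_rpow (by positivity)]

lemma lintegral_prod_mul_mul_le_of_schur [SFinite μ] [SFinite ν] {f : α → ℝ≥0∞} {g : β → ℝ≥0∞}
    {k : α × β → ℝ≥0∞} (hf : Measurable f) (hg : Measurable g) (hk : Measurable k) {M : ℝ≥0∞}
    (hkr : ∀ x, ∫⁻ y, k (x, y) ∂ν ≤ M) (hkl : ∀ y, ∫⁻ x, k (x, y) ∂μ ≤ M) :
    ∫⁻ z, f z.1 * g z.2 * k z ∂μ.prod ν ≤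
      (∫⁻ x, f x ^ (2 : ℝ) ∂μ) ^ (1 / 2 : ℝ) * (∫⁻ y, g y ^ (2 : ℝ) ∂ν) ^ (1 / 2 : ℝ) * M := by
  simpa only [one_div, ENNReal.rpow_one] using lintegral_prod_mul_mul_rpow_le hf hg hk hkr hkl
    one_le_two one_le_two (le_refl (1 : ℝ)) (by norm_num)

lemma lintegral_prod_lintegral_prod_comm [SFinite ν] [SFinite μ'] [SFinite ν']
    {φ : (α × β) × (α' × β') → ℝ≥0∞} (hφ : Measurable φ) :
    ∫⁻ x, ∫⁻ y, φ (x, y) ∂μ'.prod ν' ∂μ.prod ν =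
      ∫⁻ z, ∫⁻ w, φ ((z.1, w.1), (z.2, w.2)) ∂ν.prod ν' ∂μ.prod μ' := by
  rw [lintegral_prod _ hφ.lintegral_prod_right'.aemeasurable, lintegral_prod]
  · refine lintegral_congr fun x₁ ↦ ?_
    have h : ∀ x₂, ∫⁻ y, φ ((x₁, x₂), y) ∂μ'.prod ν' = ∫⁻ y₁, ∫⁻ y₂, φ ((x₁, x₂), y₁, y₂) ∂ν' ∂μ' :=
      fun x₂ ↦ lintegral_prod _ (by fun_prop)
    simp_rw [h]
    rw [lintegral_lintegral_swap]
    · refine lintegral_congr fun y₁ ↦ (lintegral_prod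
        (fun w : β × β' ↦ φ ((x₁, w.1), (y₁, w.2))) ?_).symm
      fun_prop
    · refine (Measurable.lintegral_prod_right' (f := fun z : (β × α') × β' ↦
        φ ((x₁, z.1.1), (z.1.2, z.2))) ?_).aemeasurable
      fun_prop
  · refine (Measurable.lintegral_prod_right' (f := fun z : (α × α') × (β × β') ↦
        φ ((z.1.1, z.2.1), (z.1.2, z.2.2))) ?_).aemeasurable
    fun_prop

lemma lintegral_mul_mul_kernel_le_mixed_norm [SFinite μ] [SFinite ν] [SFinite μ'] [SFinite ν']
    {f : α × β → ℝ≥0∞} {g : α' × β' → ℝ≥0∞} {K : α × α' → ℝ≥0∞} {k : β × β' → ℝ≥0∞}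
    (hf : Measurable f) (hg : Measurable g) (hK : Measurable K) (hk : Measurable k)
    {M m : ℝ≥0∞} (hKr : ∀ x, ∫⁻ y, K (x, y) ∂μ' ≤ M) (hKl : ∀ y, ∫⁻ x, K (x, y) ∂μ ≤ M)
    (hkr : ∀ x, ∫⁻ y, k (x, y) ∂ν' ≤ m) (hkl : ∀ y, ∫⁻ x, k (x, y) ∂ν ≤ m)
    {p : ℝ} (hp1 : 1 ≤ p) (hp2 : p ≤ 2) :
    ∫⁻ x, ∫⁻ y, f x * g y * (K (x.1, y.1) * k (x.2, y.2) ^ (2 - 2 / p)) ∂μ'.prod ν' ∂μ.prod ν ≤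
      M * m ^ (2 - 2 / p) * ((∫⁻ x, (∫⁻ y, f (x, y) ^ p ∂ν) ^ (2 / p) ∂μ) ^ (1 / 2 : ℝ) *
        (∫⁻ x, (∫⁻ y, g (x, y) ^ p ∂ν') ^ (2 / p) ∂μ') ^ (1 / 2 : ℝ)) := by
  have hp0 : 0 < p := by positivity
  set c := 2 - 2 / p with hc
  have hc1 : c ≤ 1 := by rw [hc, sub_le_comm, le_div_iff₀ hp0]; linarith
  let F : α → ℝ≥0∞ := fun x ↦ (∫⁻ y, f (x, y) ^ p ∂ν) ^ p⁻¹
  let G : α' → ℝ≥0∞ := fun x ↦ (∫⁻ y, g (x, y) ^ p ∂ν') ^ p⁻¹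
  have hF : Measurable F := (hf.pow_const p).lintegral_prod_right'.pow_const _
  have hG : Measurable G := (hg.pow_const p).lintegral_prod_right'.pow_const _
  have vertical : ∀ z : α × α', ∫⁻ w, f (z.1, w.1) * g (z.2, w.2) * (K z * k w ^ c) ∂ν.prod ν' ≤
      m ^ c * (F z.1 * G z.2 * K z) := fun z ↦ by
    calc _ = K z * ∫⁻ w, f (z.1, w.1) * g (z.2, w.2) * k w ^ c ∂ν.prod ν' := by
          simp_rw [mul_left_comm _ (K z)]
          exact lintegral_const_mul (K z) (by fun_prop)
      _ ≤ K z * (F z.1 * G z.2 * m ^ c) := by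
          gcongr
          exact lintegral_prod_mul_mul_rpow_le (by fun_prop) (by fun_prop) hk hkr hkl hp1 hp1 hc1
            (by rw [hc]; ring)
      _ = _ := by ring
  have sq_rpow : ∀ t : ℝ≥0∞, (t ^ p⁻¹) ^ (2 : ℝ) = t ^ (2 / p) := fun t ↦ by
    rw [← ENNReal.rpow_mul, inv_mul_eq_div]
  calc _ = ∫⁻ z, ∫⁻ w, f (z.1, w.1) * g (z.2, w.2) * (K z * k w ^ c) ∂ν.prod ν' ∂μ.prod μ' :=
        lintegral_prod_lintegral_prod_comm (φ := fun u ↦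
          f u.1 * g u.2 * (K (u.1.1, u.2.1) * k (u.1.2, u.2.2) ^ c)) (by fun_prop)
    _ ≤ ∫⁻ z, m ^ c * (F z.1 * G z.2 * K z) ∂μ.prod μ' := lintegral_mono vertical
    _ = m ^ c * ∫⁻ z, F z.1 * G z.2 * K z ∂μ.prod μ' := lintegral_const_mul _ (by fun_prop)
    _ ≤ m ^ c * ((∫⁻ x, F x ^ (2 : ℝ) ∂μ) ^ (1 / 2 : ℝ) *
          (∫⁻ x, G x ^ (2 : ℝ) ∂μ') ^ (1 / 2 : ℝ) * M) := by
        gcongr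
        exact lintegral_prod_mul_mul_le_of_schur hF hG hK hKr hKl
    _ = _ := by
        simp only [F, G, sq_rpow]
        ring

lemma lintegral_mul_mul_sub_kernel_le_mixed_norm {G H : Type*} [MeasurableSpace G]
    [MeasurableSpace H] [AddCommGroup G] [AddCommGroup H] [MeasurableAdd₂ G] [MeasurableNeg G]
    [MeasurableAdd₂ H] [MeasurableNeg H] {μ : Measure G} {ν : Measure H} [SFinite μ] [SFinite ν]
    [μ.IsAddLeftInvariant] [μ.IsNegInvariant] [ν.IsAddLeftInvariant] [ν.IsNegInvariant]
    {f : G × H → ℝ≥0∞} {K : G → ℝ≥0∞} {k : H → ℝ≥0∞} (hf : Measurable f) (hK : Measurable K)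
    (hk : Measurable k) {p : ℝ} (hp1 : 1 ≤ p) (hp2 : p ≤ 2) :
    ∫⁻ x, ∫⁻ y, f x * f y * (K (y.1 - x.1) * k (y.2 - x.2) ^ (2 - 2 / p)) ∂μ.prod ν ∂μ.prod ν ≤
      (∫⁻ t, K t ∂μ) * (∫⁻ t, k t ∂ν) ^ (2 - 2 / p) *
        ∫⁻ x, (∫⁻ t, f (x, t) ^ p ∂ν) ^ (2 / p) ∂μ := by
  have := lintegral_mul_mul_kernel_le_mixed_norm hf hf (μ := μ) (μ' := μ) (ν := ν) (ν' := ν)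
    (K := fun z ↦ K (z.2 - z.1)) (k := fun z ↦ k (z.2 - z.1)) (by fun_prop) (by fun_prop)
    (fun x ↦ (lintegral_sub_right_eq_self K x).le) (fun y ↦ (lintegral_sub_left_eq_self K y).le)
    (fun x ↦ (lintegral_sub_right_eq_self k x).le) (fun y ↦ (lintegral_sub_left_eq_self k y).le)
    hp1 hp2
  rwa [← ENNReal.rpow_add_of_nonneg _ _ (by norm_num) (by norm_num), add_halves,
    ENNReal.rpow_one] at this

end Kernel

section Fourier

variable {V : Type*} [NormedAddCommGroup V] [InnerProductSpace ℝ V] [FiniteDimensional ℝ V]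
  [MeasurableSpace V] [BorelSpace V]

lemma fourier_fourierChar_smul (w : V → ℂ) (x y : V) :
    𝓕 (fun ξ ↦ 𝐞 (inner ℝ ξ x) • w ξ) y = 𝓕 w (y - x) := by
  simp only [Real.fourier_eq, smul_smul, ← AddChar.map_add_eq_mul, inner_sub_right, neg_sub,
    neg_add_eq_sub]

lemma continuous_fourier {f : V → ℂ} (hf : Integrable f) : Continuous (𝓕 f) :=
  VectorFourier.fourierIntegral_continuous continuous_fourierChar (L := innerₗ V)
    continuous_inner hf

lemma norm_fourier_le (f : V → ℂ) (ξ : V) : ‖𝓕 f ξ‖ ≤ ∫ x, ‖f x‖ :=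
  VectorFourier.norm_fourierIntegral_le_integral_norm _ _ _ f ξ

lemma integrable_mul_fourier {w f : V → ℂ} (hw : Integrable w) (hf : Integrable f) :
    Integrable fun ξ ↦ w ξ * 𝓕 f ξ :=
  hw.mul_bdd (continuous_fourier hf).aestronglyMeasurable <| .of_forall (norm_fourier_le f)

lemma fourierInv_mul_fourier {w f : V → ℂ} (hw : Integrable w) (hf : Integrable f) (x : V) :
    𝓕⁻ (fun ξ ↦ w ξ * 𝓕 f ξ) x = ∫ y, f y * 𝓕 w (y - x) := by
  have hwx : Integrable fun ξ ↦ 𝐞 (inner ℝ ξ x) • w ξ := by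
    simpa using! (VectorFourier.fourierIntegral_convergent_iff (L := innerₗ V)
      continuous_fourierChar continuous_inner (-x)).2 hw
  have := VectorFourier.integral_fourierIntegral_smul_eq_flip (L := innerₗ V)
    continuous_fourierChar continuous_inner hf hwx
  calc 𝓕⁻ (fun ξ ↦ w ξ * 𝓕 f ξ) x = ∫ ξ, 𝓕 f ξ • 𝐞 (inner ℝ ξ x) • w ξ := by
        simp_rw [Real.fourierInv_eq, smul_comm (𝓕 f _), smul_eq_mul, mul_comm]
    _ = ∫ y, f y • 𝓕 (fun ξ ↦ 𝐞 (inner ℝ ξ x) • w ξ) y := by simpa using! this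
    _ = ∫ y, f y * 𝓕 w (y - x) := by simp_rw [fourier_fourierChar_smul, smul_eq_mul]

lemma integral_mul_conj_fourier_eq {f g : V → ℂ} (hf : Integrable f) (hg : Integrable g) :
    ∫ ξ, g ξ * conj (𝓕 f ξ) = ∫ x, 𝓕⁻ g x * conj (f x) := by
  have := VectorFourier.integral_sesq_fourierIntegral_eq_neg_flip (L := innerₗ V) (innerSL ℂ)
    continuous_fourierChar continuous_inner hf hg
  simpa using! this

lemma integrable_mul_norm_fourier_sq {w : V → ℝ} {f : V → ℂ} (hw : Integrable w)
    (hf : Integrable f) : Integrable fun ξ ↦ w ξ * ‖𝓕 f ξ‖ ^ 2 := by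
  refine hw.mul_bdd (c := (∫ x, ‖f x‖) ^ 2)
    ((continuous_fourier hf).norm.pow 2).aestronglyMeasurable (.of_forall fun ξ ↦ ?_)
  rw [norm_pow, norm_norm]
  exact pow_le_pow_left₀ (norm_nonneg _) (norm_fourier_le f ξ) 2

lemma integral_mul_norm_fourier_sq_eq {w : V → ℝ} {f : V → ℂ} (hw : Integrable w)
    (hf : Integrable f) :
    ((∫ ξ, w ξ * ‖𝓕 f ξ‖ ^ 2 : ℝ) : ℂ) =
      ∫ x, (∫ y, f y * 𝓕 (fun ξ ↦ (w ξ : ℂ)) (y - x)) * conj (f x) := by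
  have hwC : Integrable fun ξ ↦ (w ξ : ℂ) := hw.ofReal
  have hsq : ∀ ξ, ((w ξ * ‖𝓕 f ξ‖ ^ 2 : ℝ) : ℂ) = (w ξ * 𝓕 f ξ) * conj (𝓕 f ξ) := fun ξ ↦ by
    rw [mul_assoc, Complex.mul_conj']
    push_cast
    rfl
  simp_rw [← integral_complex_ofReal, hsq,
    integral_mul_conj_fourier_eq hf (integrable_mul_fourier hwC hf), fourierInv_mul_fourier hwC hf]

lemma lintegral_ofReal_mul_enorm_fourier_sq_le {w : V → ℝ} (hw : Integrable w) (hw0 : 0 ≤ w)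
    {f : V → ℂ} (hf : Integrable f) :
    ∫⁻ ξ, ENNReal.ofReal (w ξ) * ‖𝓕 f ξ‖ₑ ^ 2 ≤
      ∫⁻ x, ∫⁻ y, ‖f x‖ₑ * ‖f y‖ₑ * ‖𝓕 (fun ξ ↦ (w ξ : ℂ)) (y - x)‖ₑ := by
  have h0 : ∀ ξ, 0 ≤ w ξ * ‖𝓕 f ξ‖ ^ 2 := fun ξ ↦ mul_nonneg (hw0 ξ) (sq_nonneg _)
  calc ∫⁻ ξ, ENNReal.ofReal (w ξ) * ‖𝓕 f ξ‖ₑ ^ 2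
      = ∫⁻ ξ, ENNReal.ofReal (w ξ * ‖𝓕 f ξ‖ ^ 2) := by
        simp_rw [ENNReal.ofReal_mul (hw0 _), ENNReal.ofReal_pow (norm_nonneg _), ofReal_norm]
    _ = ‖((∫ ξ, w ξ * ‖𝓕 f ξ‖ ^ 2 : ℝ) : ℂ)‖ₑ := by
        rw [← ofReal_integral_eq_lintegral_ofReal (integrable_mul_norm_fourier_sq hw hf)
          (.of_forall h0), ← ofReal_norm, Complex.norm_of_nonneg (integral_nonneg h0)]
    _ ≤ ∫⁻ x, (∫⁻ y, ‖f y * 𝓕 (fun ξ ↦ (w ξ : ℂ)) (y - x)‖ₑ) * ‖f x‖ₑ := by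
        rw [integral_mul_norm_fourier_sq_eq hw hf]
        refine (enorm_integral_le_lintegral_enorm _).trans ?_
        gcongr with x
        rw [enorm_mul, RCLike.enorm_conj]
        gcongr
        exact enorm_integral_le_lintegral_enorm _
    _ = _ := by
        refine lintegral_congr fun x ↦ ?_
        rw [mul_comm, ← lintegral_const_mul' _ _ enorm_ne_top]
        simp_rw [enorm_mul, mul_assoc]

end Fourier

section Gaussian

variable {ι : Type*} [Fintype ι]

/-- The anisotropic Gaussian weight of width `a i` in the `i`-th coordinate, a smooth
substitute for the indicator function of the box `|ξ i| < a i`. -/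
def gaussianWeight (a : ι → ℝ) (ξ : EuclideanSpace ℝ ι) : ℝ := rexp (-π * ∑ i, (ξ i / a i) ^ 2)

/-- The Fourier transform of the one-dimensional Gaussian weight `t ↦ exp (-π (t / a) ^ 2)` for
`a > 0`. It is a probability density on `ℝ`. -/
def gaussianKernel (a t : ℝ) : ℝ := a * rexp (-π * (a * t) ^ 2)

lemma gaussianWeight_pos (a : ι → ℝ) (ξ : EuclideanSpace ℝ ι) : 0 < gaussianWeight a ξ :=
  Real.exp_pos _

lemma ofReal_gaussianWeight_toLp (a v : ι → ℝ) :
    (gaussianWeight a (WithLp.toLp 2 v) : ℂ) =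
      cexp (-∑ i, (π / a i ^ 2 : ℝ) * (v i : ℂ) ^ 2) := by
  simp only [gaussianWeight, Complex.ofReal_exp, neg_mul, Finset.mul_sum]
  push_cast
  rw [← Finset.sum_neg_distrib]
  congr! 2 with i
  ring

lemma integrable_gaussianWeight {a : ι → ℝ} (ha : ∀ i, 0 < a i) :
    Integrable (gaussianWeight a) := by
  have hb : ∀ i, 0 < ((π / a i ^ 2 : ℝ) : ℂ).re := fun i ↦ by
    have := ha i
    rw [Complex.ofReal_re]
    positivity
  rw [← (PiLp.volume_preserving_toLp ι).integrable_comp_emb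
    (MeasurableEquiv.toLp 2 _).measurableEmbedding]
  have := (GaussianFourier.integrable_cexp_neg_sum_mul_add hb 0).re
  simp only [Pi.zero_apply, zero_mul, Finset.sum_const_zero, add_zero,
    ← ofReal_gaussianWeight_toLp] at this
  exact this

lemma gaussianKernel_eq_gaussian_factor {a : ℝ} (ha : 0 < a) (t : ℝ) :
    (π / (π / a ^ 2 : ℝ) : ℂ) ^ (1 / 2 : ℂ) *
      cexp ((-2 * π * t * I) ^ 2 / (4 * (π / a ^ 2 : ℝ))) = gaussianKernel a t := by
  have hsqrt : (π / (π / a ^ 2 : ℝ) : ℂ) ^ (1 / 2 : ℂ) = a := by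
    have : (π / (π / a ^ 2 : ℝ) : ℂ) = (a ^ 2 : ℝ) := by
      rw [← Complex.ofReal_div]; congr 1; field_simp
    rw [this, show (1 / 2 : ℂ) = (1 / 2 : ℝ) by norm_num, ← Complex.ofReal_cpow (by positivity),
      ← Real.sqrt_eq_rpow, Real.sqrt_sq ha.le]
  have hexp : (-2 * π * t * I) ^ 2 / (4 * (π / a ^ 2 : ℝ)) = (-π * (a * t) ^ 2 : ℝ) := by
    have : (a : ℂ) ≠ 0 := by exact_mod_cast ha.ne'
    have : (π : ℂ) ≠ 0 := by exact_mod_cast Real.pi_ne_zero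
    push_cast
    rw [mul_pow, Complex.I_sq]
    field_simp
    ring
  rw [hsqrt, hexp, gaussianKernel]
  push_cast
  rfl

lemma fourier_gaussianWeight {a : ι → ℝ} (ha : ∀ i, 0 < a i) (x : EuclideanSpace ℝ ι) :
    𝓕 (fun ξ ↦ (gaussianWeight a ξ : ℂ)) x = ∏ i, (gaussianKernel (a i) (x i) : ℂ) := by
  have hb : ∀ i, 0 < ((π / a i ^ 2 : ℝ) : ℂ).re := fun i ↦ by
    have := ha i
    rw [Complex.ofReal_re]
    positivity
  simp_rw [← gaussianKernel_eq_gaussian_factor (ha _)]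
  rw [← GaussianFourier.integral_cexp_neg_sum_mul_add hb, Real.fourier_eq',
    ← (PiLp.volume_preserving_toLp ι).integral_comp
      (MeasurableEquiv.toLp 2 _).measurableEmbedding]
  refine integral_congr_ae (.of_forall fun v ↦ ?_)
  simp only [ofReal_gaussianWeight_toLp, smul_eq_mul, ← Complex.exp_add, PiLp.inner_apply,
    RCLike.inner_apply, conj_trivial]
  rw [add_comm]
  push_cast [Finset.mul_sum, Finset.sum_mul]
  congr! 3
  ring

variable {a : ℝ}

lemma gaussianKernel_pos (ha : 0 < a) (t : ℝ) : 0 < gaussianKernel a t := by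
  unfold gaussianKernel
  positivity

@[fun_prop]
lemma continuous_gaussianKernel : Continuous (gaussianKernel a) := by
  unfold gaussianKernel
  fun_prop

lemma gaussianKernel_le (ha : 0 < a) (t : ℝ) : gaussianKernel a t ≤ a :=
  mul_le_of_le_one_right ha.le <| Real.exp_le_one_iff.2 <|
    mul_nonpos_of_nonpos_of_nonneg (neg_nonpos.2 pi_pos.le) (sq_nonneg _)

lemma lintegral_gaussianKernel (ha : 0 < a) : ∫⁻ t, ENNReal.ofReal (gaussianKernel a t) = 1 := by
  have hb : 0 < π * a ^ 2 := by positivity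
  have hk : gaussianKernel a = fun t ↦ a * rexp (-(π * a ^ 2) * t ^ 2) := by
    ext t
    rw [gaussianKernel]
    ring_nf
  have hsqrt : √(π / (π * a ^ 2)) = a⁻¹ := by
    rw [div_mul_cancel_left₀ Real.pi_ne_zero, Real.sqrt_inv, Real.sqrt_sq ha.le]
  rw [← ofReal_integral_eq_lintegral_ofReal _ (.of_forall fun t ↦ (gaussianKernel_pos ha t).le),
    hk, integral_const_mul, integral_gaussian, hsqrt, mul_inv_cancel₀ ha.ne', ENNReal.ofReal_one]
  rw [hk]
  exact (integrable_exp_neg_mul_sq hb).const_mul a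

lemma ofReal_gaussianKernel_le (ha : 0 < a) {c : ℝ} (hc1 : c ≤ 1) (t : ℝ) :
    ENNReal.ofReal (gaussianKernel a t) ≤
      ENNReal.ofReal (a ^ (1 - c)) * ENNReal.ofReal (gaussianKernel a t) ^ c := by
  have hk := gaussianKernel_pos ha t
  rw [ENNReal.ofReal_rpow_of_pos hk, ← ENNReal.ofReal_mul (by positivity)]
  refine ENNReal.ofReal_le_ofReal ?_
  calc gaussianKernel a t = gaussianKernel a t ^ (1 - c) * gaussianKernel a t ^ c := by
        rw [← Real.rpow_add hk, sub_add_cancel, Real.rpow_one]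
    _ ≤ _ := by gcongr; exact gaussianKernel_le ha t

end Gaussian

section Anisotropic

/-- `pt` as a map from the product of the horizontal plane and the vertical line, the shape in which
Fubini's theorem applies. -/
def ptProd (x : (ℝ × ℝ) × ℝ) : E3 := pt x.1.1 x.1.2 x.2

lemma measurePreserving_ptProd : MeasurePreserving ptProd := by
  have hswap := (Measure.measurePreserving_swap (μ := (volume : Measure (Fin 2 → ℝ)))
    (ν := (volume : Measure ℝ))).comp <|
      (volume_preserving_finTwoArrow ℝ).symm.prod (.id volume)
  have hcons := (volume_preserving_piFinSuccAbove (fun _ : Fin 3 ↦ ℝ) (Fin.last 2)).symm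
  convert! (PiLp.volume_preserving_toLp (Fin 3)).comp (hcons.comp hswap) using 1
  ext x i
  fin_cases i <;> rfl

lemma lintegral_lintegral_ptProd {φ : E3 × E3 → ℝ≥0∞} (hφ : Measurable φ) :
    ∫⁻ x, ∫⁻ y, φ (x, y) = ∫⁻ x, ∫⁻ y, φ (ptProd x, ptProd y) := by
  rw [← measurePreserving_ptProd.lintegral_comp hφ.lintegral_prod_right']
  exact lintegral_congr fun x ↦ (measurePreserving_ptProd.lintegral_comp (by fun_prop)).symm

lemma L2hLpvNorm_nonneg (p : ℝ) (U : E3 → ℝ) : 0 ≤ L2hLpvNorm p U :=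
  Real.rpow_nonneg (integral_nonneg fun xh ↦ Real.rpow_nonneg
    (integral_nonneg fun x3 ↦ by positivity) _) _

/-- The norm of `L²_h L^p_v` with values in `[0, ∞]`, meaningful without any integrability. -/
def eL2hLpvNorm {F : Type*} [NormedAddCommGroup F] (p : ℝ) (f : E3 → F) : ℝ≥0∞ :=
  (∫⁻ xh : ℝ × ℝ, (∫⁻ x3 : ℝ, ‖f (ptProd (xh, x3))‖ₑ ^ p) ^ (2 / p)) ^ (1 / 2 : ℝ)

lemma ofReal_L2hLpvNorm {p : ℝ} (hp : 0 < p) {U : E3 → ℝ} (hU : MemL2hLpv p U)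
    (hslice : ∀ᵐ xh : ℝ × ℝ, Integrable fun x3 ↦ |U (ptProd (xh, x3))| ^ p) :
    ENNReal.ofReal (L2hLpvNorm p U) = eL2hLpvNorm p U := by
  have h0 : ∀ xh : ℝ × ℝ, 0 ≤ ∫ x3, |U (pt xh.1 xh.2 x3)| ^ p := fun xh ↦
    integral_nonneg fun x3 ↦ by positivity
  have h0' : ∀ xh : ℝ × ℝ, 0 ≤ (∫ x3, |U (pt xh.1 xh.2 x3)| ^ p) ^ (2 / p) := fun xh ↦
    Real.rpow_nonneg (h0 xh) _
  rw [L2hLpvNorm, eL2hLpvNorm, ← ENNReal.ofReal_rpow_of_nonneg (integral_nonneg h0') (by norm_num),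
    ofReal_integral_eq_lintegral_ofReal hU (.of_forall h0')]
  congr 1
  refine lintegral_congr_ae ?_
  filter_upwards [hslice] with xh hxh
  rw [← ENNReal.ofReal_rpow_of_nonneg (h0 xh) (by positivity)]
  congr 1
  refine (ofReal_integral_eq_lintegral_ofReal hxh (.of_forall fun x3 ↦ by positivity)).trans ?_
  refine lintegral_congr fun x3 ↦ ?_
  rw [← ENNReal.ofReal_rpow_of_nonneg (abs_nonneg _) hp.le, ← Real.norm_eq_abs, ofReal_norm]

lemma abs_rpow_le_abs_add_sq {p : ℝ} (hp1 : 1 ≤ p) (hp2 : p ≤ 2) (u : ℝ) :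
    |u| ^ p ≤ |u| + u ^ 2 := by
  rw [← sq_abs]
  rcases le_total |u| 1 with hu | hu
  · calc |u| ^ p ≤ |u| ^ (1 : ℝ) := Real.rpow_le_rpow_of_exponent_ge_of_imp (abs_nonneg u) hu hp1
          (by intros; linarith)
      _ ≤ |u| + |u| ^ 2 := by rw [Real.rpow_one]; exact le_add_of_nonneg_right (sq_nonneg _)
  · calc |u| ^ p ≤ |u| ^ (2 : ℝ) := Real.rpow_le_rpow_of_exponent_le hu hp2
      _ ≤ |u| + |u| ^ 2 := by rw [Real.rpow_two]; exact le_add_of_nonneg_left (abs_nonneg u)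

lemma ae_integrable_abs_rpow_slice {p : ℝ} (hp1 : 1 ≤ p) (hp2 : p ≤ 2) {U : E3 → ℝ}
    (hU1 : Integrable U) (hU2 : MemLp U 2) :
    ∀ᵐ xh : ℝ × ℝ, Integrable fun x3 ↦ |U (ptProd (xh, x3))| ^ p := by
  have hUp : Integrable fun x ↦ |U x| ^ p := by
    refine (hU1.abs.add hU2.integrable_sq).mono'
      (hU1.aestronglyMeasurable.aemeasurable.abs.pow_const p).aestronglyMeasurable
      (.of_forall fun x ↦ ?_)
    rw [Real.norm_of_nonneg (by positivity)]
    exact abs_rpow_le_abs_add_sq hp1 hp2 (U x)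
  exact (measurePreserving_ptProd.integrable_comp_of_integrable hUp).prod_right_ae

lemma lintegral_mul_mul_gaussianKernel_le {G : Type*} [MeasurableSpace G] [AddCommGroup G]
    [MeasurableAdd₂ G] [MeasurableNeg G] {μ : Measure G} [SFinite μ] [μ.IsAddLeftInvariant]
    [μ.IsNegInvariant] {K : G → ℝ≥0∞} (hK : Measurable K) {F : G × ℝ → ℝ≥0∞} (hF : Measurable F)
    {r p : ℝ} (hr : 0 < r) (hp1 : 1 ≤ p) (hp2 : p ≤ 2) :
    ∫⁻ x, ∫⁻ y, F x * F y * (K (y.1 - x.1) * ENNReal.ofReal (gaussianKernel r (y.2 - x.2)))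
        ∂μ.prod volume ∂μ.prod volume ≤
      ENNReal.ofReal (r ^ (2 / p - 1)) * (∫⁻ t, K t ∂μ) *
        ∫⁻ x, (∫⁻ t, F (x, t) ^ p) ^ (2 / p) ∂μ := by
  let k : ℝ → ℝ≥0∞ := fun t ↦ ENNReal.ofReal (gaussianKernel r t)
  have hk : Measurable k := by fun_prop
  set A := ENNReal.ofReal (r ^ (2 / p - 1)) with hA
  set c := 2 - 2 / p with hc
  have hc1 : c ≤ 1 := by
    rw [hc, sub_le_comm, le_div_iff₀ (by positivity)]
    linarith
  have hkle : ∀ t, k t ≤ A * k t ^ c := fun t ↦ by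
    rw [hA, show 2 / p - 1 = 1 - c by rw [hc]; ring]
    exact ofReal_gaussianKernel_le hr hc1 t
  calc _ ≤ ∫⁻ x, ∫⁻ y, A * (F x * F y * (K (y.1 - x.1) * k (y.2 - x.2) ^ c))
            ∂μ.prod volume ∂μ.prod volume := by
        refine lintegral_mono fun x ↦ lintegral_mono fun y ↦ ?_
        calc _ ≤ F x * F y * (K (y.1 - x.1) * (A * k (y.2 - x.2) ^ c)) := by
              gcongr
              exact hkle _
          _ = _ := by ring
    _ = A * ∫⁻ x, ∫⁻ y, F x * F y * (K (y.1 - x.1) * k (y.2 - x.2) ^ c)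
            ∂μ.prod volume ∂μ.prod volume := by
        simp_rw [lintegral_const_mul' A _ ENNReal.ofReal_ne_top]
    _ ≤ A * ((∫⁻ t, K t ∂μ) * (∫⁻ t, k t) ^ c * ∫⁻ x, (∫⁻ t, F (x, t) ^ p) ^ (2 / p) ∂μ) := by
        gcongr
        exact lintegral_mul_mul_sub_kernel_le_mixed_norm hF hK hk hp1 hp2
    _ = _ := by rw [lintegral_gaussianKernel hr, ENNReal.one_rpow, mul_one, mul_assoc]

/-- The factor of the kernel `𝓕 (gaussianWeight ![R, R, r])` that depends on the two horizontal
variables. -/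
def horizontalKernel (R : ℝ) (t : ℝ × ℝ) : ℝ≥0∞ :=
  ENNReal.ofReal (gaussianKernel R t.1) * ENNReal.ofReal (gaussianKernel R t.2)

lemma measurable_horizontalKernel (R : ℝ) : Measurable (horizontalKernel R) := by
  unfold horizontalKernel
  fun_prop

lemma lintegral_horizontalKernel {R : ℝ} (hR : 0 < R) : ∫⁻ t, horizontalKernel R t = 1 := by
  have hm : Measurable fun t ↦ ENNReal.ofReal (gaussianKernel R t) := by fun_prop
  simp_rw [horizontalKernel, Measure.volume_eq_prod,
    lintegral_prod_mul hm.aemeasurable hm.aemeasurable, lintegral_gaussianKernel hR, one_mul]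

lemma enorm_fourier_gaussianWeight_ptProd_sub {R r : ℝ} (hR : 0 < R) (hr : 0 < r)
    (x y : (ℝ × ℝ) × ℝ) :
    ‖𝓕 (fun ξ ↦ (gaussianWeight ![R, R, r] ξ : ℂ)) (ptProd y - ptProd x)‖ₑ =
      horizontalKernel R (y.1 - x.1) * ENNReal.ofReal (gaussianKernel r (y.2 - x.2)) := by
  have ha : ∀ i, 0 < ![R, R, r] i := by simp [Fin.forall_fin_succ, hR, hr]
  have he : ∀ {a : ℝ}, 0 < a → ∀ t, ‖(gaussianKernel a t : ℂ)‖ₑ =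
      ENNReal.ofReal (gaussianKernel a t) := fun ha t ↦ by
    rw [← ofReal_norm, Complex.norm_of_nonneg (gaussianKernel_pos ha t).le]
  rw [fourier_gaussianWeight ha, Fin.prod_univ_three, enorm_mul, enorm_mul, he (ha 0), he (ha 1),
    he (ha 2)]
  rfl

lemma lintegral_gaussianWeight_mul_enorm_fourier_sq_le {R r p : ℝ} (hR : 0 < R) (hr : 0 < r)
    (hp1 : 1 ≤ p) (hp2 : p ≤ 2) {f : E3 → ℂ} (hf : Measurable f) (hfi : Integrable f) :
    ∫⁻ ξ, ENNReal.ofReal (gaussianWeight ![R, R, r] ξ) * ‖𝓕 f ξ‖ₑ ^ 2 ≤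
      ENNReal.ofReal (r ^ (2 / p - 1)) * eL2hLpvNorm p f ^ 2 := by
  have hw : Integrable (gaussianWeight ![R, R, r]) :=
    integrable_gaussianWeight (by simp [Fin.forall_fin_succ, hR, hr])
  have hκ : Measurable (𝓕 fun ξ ↦ (gaussianWeight ![R, R, r] ξ : ℂ)) :=
    (continuous_fourier hw.ofReal).measurable
  let F : (ℝ × ℝ) × ℝ → ℝ≥0∞ := fun x ↦ ‖f (ptProd x)‖ₑ
  have hF : Measurable F := (hf.comp measurePreserving_ptProd.measurable).enorm
  calc _ ≤ ∫⁻ x, ∫⁻ y, ‖f x‖ₑ * ‖f y‖ₑ *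
          ‖𝓕 (fun ξ ↦ (gaussianWeight ![R, R, r] ξ : ℂ)) (y - x)‖ₑ :=
        lintegral_ofReal_mul_enorm_fourier_sq_le hw (fun ξ ↦ (gaussianWeight_pos _ ξ).le) hfi
    _ = ∫⁻ x, ∫⁻ y, F x * F y *
          ‖𝓕 (fun ξ ↦ (gaussianWeight ![R, R, r] ξ : ℂ)) (ptProd y - ptProd x)‖ₑ :=
        lintegral_lintegral_ptProd (φ := fun z ↦ ‖f z.1‖ₑ * ‖f z.2‖ₑ *
          ‖𝓕 (fun ξ ↦ (gaussianWeight ![R, R, r] ξ : ℂ)) (z.2 - z.1)‖ₑ)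
          (((hf.comp measurable_fst).enorm.mul (hf.comp measurable_snd).enorm).mul
            (hκ.comp (measurable_snd.sub measurable_fst)).enorm)
    _ = ∫⁻ x, ∫⁻ y, F x * F y * (horizontalKernel R (y.1 - x.1) *
          ENNReal.ofReal (gaussianKernel r (y.2 - x.2))) := by
        simp_rw [enorm_fourier_gaussianWeight_ptProd_sub hR hr]
    _ ≤ ENNReal.ofReal (r ^ (2 / p - 1)) * (∫⁻ t, horizontalKernel R t) *
          ∫⁻ xh, (∫⁻ x3, F (xh, x3) ^ p) ^ (2 / p) :=
        lintegral_mul_mul_gaussianKernel_le (measurable_horizontalKernel R) hF hr hp1 hp2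
    _ = _ := by
        rw [lintegral_horizontalKernel hR, mul_one, eL2hLpvNorm, ← ENNReal.rpow_natCast,
          ← ENNReal.rpow_mul]
        norm_num [F]

end Anisotropic

section LowFrequency

variable {R r s : ℝ} {ξ : E3}

lemma norm_sq_eq_xih_sq_add (ξ : E3) : ‖ξ‖ ^ 2 = xih ξ ^ 2 + ξ 2 ^ 2 := by
  rw [EuclideanSpace.norm_sq_eq, Fin.sum_univ_three, xih, Real.sq_sqrt (by positivity)]
  simp only [Real.norm_eq_abs, sq_abs]

lemma one_add_norm_sq_rpow_le (hs : 0 ≤ s) (hR : 1 ≤ R) (hrR : r ≤ R) (hξ3 : |ξ 2| < r)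
    (hξh : xih ξ < R) : (1 + ‖ξ‖ ^ 2) ^ s ≤ 3 ^ s * R ^ (2 * s) := by
  have hξh' : xih ξ ^ 2 ≤ R ^ 2 := pow_le_pow_left₀ (Real.sqrt_nonneg _) hξh.le 2
  have hξ3' : ξ 2 ^ 2 ≤ R ^ 2 := sq_le_sq.2 (hξ3.le.trans (hrR.trans (le_abs_self R)))
  have h : 1 + ‖ξ‖ ^ 2 ≤ 3 * R ^ 2 := by
    rw [norm_sq_eq_xih_sq_add]
    linarith [one_le_pow₀ hR (n := 2)]
  calc (1 + ‖ξ‖ ^ 2) ^ s ≤ (3 * R ^ 2) ^ s := by gcongr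
    _ = 3 ^ s * R ^ (2 * s) := by
      rw [Real.mul_rpow (by norm_num) (sq_nonneg R), ← Real.rpow_natCast_mul (by positivity)]
      norm_num

lemma one_le_exp_mul_gaussianWeight (hR : 0 < R) (hξ3 : |ξ 2| < r) (hξh : xih ξ < R) :
    1 ≤ rexp (2 * π) * gaussianWeight ![R, R, r] ξ := by
  have hr : 0 < r := (abs_nonneg _).trans_lt hξ3
  have hξh' : (ξ 0 / R) ^ 2 + (ξ 1 / R) ^ 2 ≤ 1 := by
    rw [div_pow, div_pow, ← add_div, div_le_one (by positivity), ← Real.sqrt_le_left hR.le]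
    exact hξh.le
  have hξ3' : (ξ 2 / r) ^ 2 ≤ 1 := by
    rw [div_pow, div_le_one (by positivity)]
    exact sq_le_sq.2 (hξ3.le.trans (le_abs_self r))
  have hsum : ∑ i, (ξ i / ![R, R, r] i) ^ 2 ≤ 2 := by
    simp only [Fin.sum_univ_three]
    exact (add_le_add hξh' hξ3').trans_eq one_add_one_eq_two
  rw [gaussianWeight, ← Real.exp_add, Real.one_le_exp_iff]
  nlinarith [Real.pi_pos]

lemma measurableSet_lowFrequency (r R : ℝ) : MeasurableSet {ξ : E3 | |ξ 2| < r ∧ xih ξ < R} := by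
  unfold xih
  measurability

theorem setLIntegral_one_add_norm_sq_rpow_mul_enorm_FT_sq_le {p : ℝ} (hs : 0 ≤ s) (hR : 1 ≤ R)
    (hr : 0 < r) (hrR : r ≤ R) (hp1 : 1 ≤ p) (hp2 : p ≤ 2) {f : E3 → ℂ} (hf : Measurable f)
    (hfi : Integrable f) :
    ∫⁻ ξ in {ξ : E3 | |ξ 2| < r ∧ xih ξ < R},
        ENNReal.ofReal ((1 + ‖ξ‖ ^ 2) ^ s) * ‖FT f ξ‖ₑ ^ 2 ≤
      ENNReal.ofReal (3 ^ s * rexp (2 * π) * R ^ (2 * s) * r ^ (2 / p - 1)) *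
        eL2hLpvNorm p f ^ 2 := by
  have hR0 : 0 < R := one_pos.trans_le hR
  let A : ℝ := 3 ^ s * rexp (2 * π) * R ^ (2 * s)
  have hA : 0 ≤ A := by positivity
  have hweight : ∀ ξ ∈ {ξ : E3 | |ξ 2| < r ∧ xih ξ < R},
      (1 + ‖ξ‖ ^ 2) ^ s ≤ A * gaussianWeight ![R, R, r] ξ := fun ξ ⟨hξ3, hξh⟩ ↦ by
    calc (1 + ‖ξ‖ ^ 2) ^ s ≤ 3 ^ s * R ^ (2 * s) * 1 := by
          rw [mul_one]
          exact one_add_norm_sq_rpow_le hs hR hrR hξ3 hξh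
      _ ≤ 3 ^ s * R ^ (2 * s) * (rexp (2 * π) * gaussianWeight ![R, R, r] ξ) := by
          gcongr
          exact one_le_exp_mul_gaussianWeight hR0 hξ3 hξh
      _ = A * gaussianWeight ![R, R, r] ξ := by ring
  calc _ ≤ ∫⁻ ξ in {ξ : E3 | |ξ 2| < r ∧ xih ξ < R},
          ENNReal.ofReal A * (ENNReal.ofReal (gaussianWeight ![R, R, r] ξ) * ‖𝓕 f ξ‖ₑ ^ 2) := by
        refine setLIntegral_mono' (measurableSet_lowFrequency r R) fun ξ hξ ↦ ?_
        rw [← mul_assoc, ← ENNReal.ofReal_mul hA]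
        exact mul_le_mul_left (ENNReal.ofReal_le_ofReal (hweight ξ hξ)) _
    _ ≤ ENNReal.ofReal A * ∫⁻ ξ, ENNReal.ofReal (gaussianWeight ![R, R, r] ξ) * ‖𝓕 f ξ‖ₑ ^ 2 := by
        rw [← lintegral_const_mul' _ _ ENNReal.ofReal_ne_top]
        exact setLIntegral_le_lintegral _ _
    _ ≤ ENNReal.ofReal A * (ENNReal.ofReal (r ^ (2 / p - 1)) * eL2hLpvNorm p f ^ 2) := by
        gcongr
        exact lintegral_gaussianWeight_mul_enorm_fourier_sq_le hR0 hr hp1 hp2 hf hfi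
    _ = _ := by rw [← mul_assoc, ← ENNReal.ofReal_mul hA]

/-- `FT` is the Fourier integral, not its extension to `L²`. -/
lemma FT_eq_zero_of_not_integrable {f : E3 → ℂ} (hf : ¬ Integrable f) : FT f = 0 :=
  funext fun ξ ↦ integral_undef fun h ↦ hf <|
    (VectorFourier.fourierIntegral_convergent_iff (L := innerₗ E3) continuous_fourierChar
      continuous_inner ξ).1 h

lemma setIntegral_one_add_norm_sq_rpow_mul_norm_FT_sq_eq {f : E3 → ℂ} (hf : Integrable f) :
    ∫ ξ in {ξ : E3 | |ξ 2| < r ∧ xih ξ < R}, (1 + ‖ξ‖ ^ 2) ^ s * ‖FT f ξ‖ ^ 2 =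
      (∫⁻ ξ in {ξ : E3 | |ξ 2| < r ∧ xih ξ < R},
        ENNReal.ofReal ((1 + ‖ξ‖ ^ 2) ^ s) * ‖FT f ξ‖ₑ ^ 2).toReal := by
  have hFT : Measurable (FT f) := (continuous_fourier hf).measurable
  rw [integral_eq_lintegral_of_nonneg_ae (.of_forall fun ξ ↦ by positivity)
    (Measurable.aestronglyMeasurable (by fun_prop))]
  congr 1
  refine lintegral_congr fun ξ ↦ ?_
  rw [ENNReal.ofReal_mul (by positivity), ENNReal.ofReal_pow (norm_nonneg _), ofReal_norm]

theorem low_vertical_frequency_estimate_general {p : ℝ} (hs : 0 ≤ s) (hR : 1 ≤ R) (hr : 0 < r)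
    (hrR : r ≤ R) (hp1 : 1 ≤ p) (hp2 : p ≤ 2) {U0 : E3 → ℝ} (hU : Measurable U0)
    (hU2 : MemLp U0 2) (hUp : MemL2hLpv p U0) :
    ∫ ξ in {ξ : E3 | |ξ 2| < r ∧ xih ξ < R}, (1 + ‖ξ‖ ^ 2) ^ s * ‖FTr U0 ξ‖ ^ 2 ≤
      3 ^ s * rexp (2 * π) * R ^ (2 * s) * r ^ (2 / p - 1) * L2hLpvNorm p U0 ^ 2 := by
  by_cases hUi : Integrable U0
  · have hnorm : ENNReal.ofReal (L2hLpvNorm p U0) = eL2hLpvNorm p fun x ↦ (U0 x : ℂ) := by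
      rw [ofReal_L2hLpvNorm (by positivity) hUp (ae_integrable_abs_rpow_slice hp1 hp2 hUi hU2)]
      simp only [eL2hLpvNorm, ← ofReal_norm, Complex.norm_real]
    have hUi' : Integrable fun x ↦ (U0 x : ℂ) := hUi.ofReal
    rw [FTr, setIntegral_one_add_norm_sq_rpow_mul_norm_FT_sq_eq hUi']
    refine ENNReal.toReal_le_of_le_ofReal (by positivity) ?_
    rw [ENNReal.ofReal_mul (by positivity), ENNReal.ofReal_pow (L2hLpvNorm_nonneg p U0), hnorm]
    exact setLIntegral_one_add_norm_sq_rpow_mul_enorm_FT_sq_le hs hR hr hrR hp1 hp2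
      (Complex.measurable_ofReal.comp hU) hUi'
  · have hFT : FTr U0 = 0 := FT_eq_zero_of_not_integrable fun h ↦ hUi h.re
    simp only [hFT, Pi.zero_apply, norm_zero, zero_pow two_ne_zero, mul_zero, integral_zero]
    positivity

end LowFrequency

/-- Let `s ≥ 0`, `p ∈ (1,2)`, `p' = p/(2−p)`. There is `C > 0`
(depending only on `s, p`) such that for every `R ≥ 1`, `0 < r ≤ 1` and every
`U₀ ∈ L²(ℝ³) ∩ L²_hL^p_v(ℝ³)`:
`∫_{|ξ₃|<r, |ξ_h|<R} (1+|ξ|²)^s |Û₀(ξ)|² dξ ≤ C R^{2s} r^{1/p'} ‖U₀‖²_{L²_hL^p_v}`. -/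
theorem low_vertical_frequency_estimate (s p : ℝ) (hs : 0 ≤ s) (hp1 : 1 < p) (hp2 : p < 2) :
    ∃ C : ℝ, 0 < C ∧ ∀ R r : ℝ, 1 ≤ R → 0 < r → r ≤ 1 →
      ∀ U0 : E3 → ℝ, Measurable U0 → MemLp U0 2 volume → MemL2hLpv p U0 →
        (∫ ξ in {ξ : E3 | |ξ 2| < r ∧ xih ξ < R},
            (1 + ‖ξ‖ ^ 2) ^ s * ‖FTr U0 ξ‖ ^ 2) ≤
          C * R ^ (2 * s) * r ^ (1 / (p / (2 - p))) * L2hLpvNorm p U0 ^ 2 := by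
  refine ⟨3 ^ s * rexp (2 * π), by positivity, fun R r hR hr hr1 U0 hU hU2 hUp ↦ ?_⟩
  rw [show 1 / (p / (2 - p)) = 2 / p - 1 by field_simp]
  exact low_vertical_frequency_estimate_general hs hR hr (hr1.trans hR) hp1.le hp2.le hU hU2 hUp
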